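/- Let A_1 = K[X]/(f_1(X)) and A_2 = K[X]/(f_2(X)) be isomorphic polynomially cyclic algebras over a finite field K, both of degree n, with Galois groups G_i = ⟨ν_i⟩ and generators α_i = X mod f_i(X). Suppose φ: A_1 → A_2 is a K-algebra isomorphism satisfying φ ∘ ν_1 = ν_2 ∘ φ and φ(α_1) = Σ_{i=1}^{n} a_i ν_2^i(α_2) with a_i ∈ K. Let ρ_n be a primitive n-th root of unity over K and let χ_1: G_1 → ⟨ρ_n⟩, χ_2: G_2 → ⟨ρ_n⟩ be characters with χ_1(ν_1) = χ_2(ν_2). Then φ((χ_1, α_1)) = (χ_2, α_2) · β(χ_2), where β(χ_2) = Σ_{i=1}^{n} a_i χ_2(ν_2^i)^{-1} ∈ K[ρ_n] and φ is extended to A_{1,ρ_n} → A_{2,ρ_n} by acting as the identity on ρ_n. -/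

import Mathlib

open Polynomial

/-- `iterComp C m` is the `m`-fold composition `C^{(m)}` of `C` with itself,
with `C^{(0)} = X`. -/
noncomputable def iterComp {K : Type*} [CommRing K] (C : K[X]) : ℕ → K[X]
  | 0 => X
  | m + 1 => (iterComp C m).comp C

/-- `f` is a cyclic polynomial with cyclicity polynomial `C`:
`f(C(X)) ≡ 0 mod f(X)`, `C^{(n)}(X) - X ≡ 0 mod f(X)` where `n = deg f`, and
`gcd(C^{(m)}(X) - X, f(X)) = 1` for `1 ≤ m < n`. -/
def IsCyclicPolyWith {K : Type*} [Field K] (f C : K[X]) : Prop :=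
  f ∣ f.comp C ∧ f ∣ (iterComp C f.natDegree - X) ∧
    ∀ m : ℕ, 1 ≤ m → m < f.natDegree → IsCoprime (iterComp C m - X) f

/-! Reindexing the resolvent cyclically shows `(χ, ν α) = χ(ν)⁻¹ (χ, α)`. As `φ` intertwines
`ν₁` and `ν₂`, it sends `(χ₁, α₁)` to `(χ₂, φ α₁)`; expanding `φ α₁ = ∑ aᵢ ν₂ⁱ α₂` linearly, the
`i`-th term contributes `aᵢ χ₂(ν₂)⁻ⁱ (χ₂, α₂)`. -/

theorem sum_range_add_one_eq_of_eq {M : Type*} [AddCommMonoid M] {g : ℕ → M} {n : ℕ}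
    (hg : g n = g 0) : ∑ j ∈ Finset.range n, g (j + 1) = ∑ j ∈ Finset.range n, g j := by
  cases n with
  | zero => rfl
  | succ m => rw [Finset.sum_range_succ, hg, ← Finset.sum_range_succ' g]

theorem map_pow_smul_of_map_smul {G H α β : Type*} [Monoid G] [MulAction G α] [Monoid H]
    [MulAction H β] {φ : α → β} {ν₁ : G} {ν₂ : H} (hφ : ∀ x, φ (ν₁ • x) = ν₂ • φ x) (k : ℕ)
    (x : α) : φ (ν₁ ^ k • x) = ν₂ ^ k • φ x := by
  simpa only [smul_iterate_apply] using Function.Semiconj.iterate_right hφ k x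

section LagrangeResolvent

open scoped TensorProduct

variable {K L G H M N : Type*} [CommSemiring K] [Semiring L] [Algebra K L]
  [Monoid G] [AddCommMonoid M] [Module K M] [DistribMulAction G M] [SMulCommClass G K M]
  [Monoid H] [AddCommMonoid N] [Module K N] [DistribMulAction H N] [SMulCommClass H K N]

/-- The Lagrange resolvent `(χ, x) = ∑_{j=1}^{n} χ(ν)^j ν^j(x)`, as a `K`-linear function of `x`.
Only the value `u = χ(ν)` of the character enters, the module containing `x` may carry any
`K`-linear action of a monoid containing `ν`, and scalars are extended from `K` to `L` by the
tensor product `L ⊗[K] M`. -/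
noncomputable def lagrangeResolvent (n : ℕ) (u : L) (ν : G) : M →ₗ[K] L ⊗[K] M :=
  ∑ j ∈ Finset.range n,
    TensorProduct.mk K L M (u ^ (j + 1)) ∘ₗ DistribSMul.toLinearMap K M (ν ^ (j + 1))

theorem lagrangeResolvent_apply (n : ℕ) (u : L) (ν : G) (x : M) :
    lagrangeResolvent (K := K) n u ν x =
      ∑ j ∈ Finset.range n, (u ^ (j + 1)) ⊗ₜ[K] (ν ^ (j + 1) • x) := by
  simp [lagrangeResolvent]

theorem smul_lagrangeResolvent_smul {n : ℕ} {u : L} {ν : G} (hu : u ^ n = 1) (hν : ν ^ n = 1)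
    (x : M) :
    u • lagrangeResolvent (K := K) n u ν (ν • x) = lagrangeResolvent n u ν x := by
  have periodic : (u ^ (n + 1)) ⊗ₜ[K] (ν ^ (n + 1) • x) =
      (u ^ (0 + 1)) ⊗ₜ[K] (ν ^ (0 + 1) • x) := by
    simp only [pow_succ, hu, hν, pow_zero]
  simp only [lagrangeResolvent_apply, Finset.smul_sum, TensorProduct.smul_tmul', smul_eq_mul,
    ← mul_smul, ← pow_succ, ← pow_succ']
  exact sum_range_add_one_eq_of_eq (g := fun j ↦ (u ^ (j + 1)) ⊗ₜ[K] (ν ^ (j + 1) • x)) periodic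

theorem lagrangeResolvent_pow_smul {n : ℕ} {u : Lˣ} {ν : G} (hu : u ^ n = 1) (hν : ν ^ n = 1)
    (k : ℕ) (x : M) :
    lagrangeResolvent (K := K) n (u : L) ν (ν ^ k • x) =
      (↑(u ^ k)⁻¹ : L) • lagrangeResolvent n (u : L) ν x := by
  have hu' : (u : L) ^ n = 1 := by rw [← Units.val_pow_eq_pow_val, hu, Units.val_one]
  rw [← Units.smul_def, eq_inv_smul_iff]
  induction k with
  | zero => simp only [pow_zero, one_smul]
  | succ k ih =>
    rw [pow_succ, pow_succ', mul_smul, mul_smul, Units.smul_def u,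
      smul_lagrangeResolvent_smul hu' hν, ih]

theorem lTensor_lagrangeResolvent {φ : M →ₗ[K] N} {ν₁ : G} {ν₂ : H}
    (hφ : ∀ x, φ (ν₁ • x) = ν₂ • φ x) (n : ℕ) (u : L) (x : M) :
    φ.lTensor L (lagrangeResolvent n u ν₁ x) = lagrangeResolvent n u ν₂ (φ x) := by
  simp only [lagrangeResolvent_apply, map_sum, LinearMap.lTensor_tmul,
    map_pow_smul_of_map_smul hφ]

theorem lTensor_lagrangeResolvent_eq_sum_smul {n : ℕ} {u : Lˣ} {φ : M →ₗ[K] N} {ν₁ : G} {ν₂ : H}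
    (hu : u ^ n = 1) (hν₂ : ν₂ ^ n = 1) (hφ : ∀ x, φ (ν₁ • x) = ν₂ • φ x) {ι : Type*}
    (s : Finset ι) (a : ι → K) (e : ι → ℕ) {x : M} {y : N}
    (hx : φ x = ∑ i ∈ s, a i • ν₂ ^ e i • y) :
    φ.lTensor L (lagrangeResolvent n (u : L) ν₁ x) =
      (∑ i ∈ s, a i • (↑(u ^ e i)⁻¹ : L)) • lagrangeResolvent n (u : L) ν₂ y := by
  rw [lTensor_lagrangeResolvent hφ, hx]
  simp only [map_sum, map_smul, lagrangeResolvent_pow_smul hu hν₂, Finset.sum_smul, smul_assoc]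

end LagrangeResolvent

section CommutativeScalars

open scoped TensorProduct

variable {K L : Type*} [CommSemiring K] [CommSemiring L] [Algebra K L]

theorem mul_tmul_one_eq_smul {A : Type*} [Semiring A] [Algebra K A] (z : L ⊗[K] A) (b : L) :
    z * b ⊗ₜ[K] (1 : A) = b • z := by
  rw [Algebra.smul_def, Algebra.TensorProduct.algebraMap_apply, Algebra.algebraMap_self_apply]
  exact (Algebra.commutes b z).symm

theorem stmt_12_general {A₁ A₂ : Type*} [Semiring A₁] [Algebra K A₁] [Semiring A₂] [Algebra K A₂]
    (n : ℕ) {ν₁ : A₁ ≃ₐ[K] A₁} {ν₂ : A₂ ≃ₐ[K] A₂} (hν₂ : ν₂ ^ n = 1)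
    (φ : A₁ →ₐ[K] A₂) (hcomm : ∀ x, φ (ν₁ x) = ν₂ (φ x)) (a : ℕ → K) {α₁ : A₁} {α₂ : A₂}
    (hφα : φ α₁ = ∑ i ∈ Finset.range n, a (i + 1) • (ν₂ ^ (i + 1)) α₂)
    (χ₁ : Subgroup.zpowers ν₁ →* Lˣ) (χ₂ : Subgroup.zpowers ν₂ →* Lˣ)
    (hχ : χ₁ ⟨ν₁, Subgroup.mem_zpowers ν₁⟩ = χ₂ ⟨ν₂, Subgroup.mem_zpowers ν₂⟩) :
    Algebra.TensorProduct.map (AlgHom.id K L) φ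
        (lagrangeResolvent n (χ₁ ⟨ν₁, Subgroup.mem_zpowers ν₁⟩ : L) ν₁ α₁) =
      lagrangeResolvent n (χ₂ ⟨ν₂, Subgroup.mem_zpowers ν₂⟩ : L) ν₂ α₂ *
        (∑ i ∈ Finset.range n,
          a (i + 1) • (↑(χ₂ (⟨ν₂, Subgroup.mem_zpowers ν₂⟩ ^ (i + 1)))⁻¹ : L)) ⊗ₜ[K] (1 : A₂) := by
  have hχ₂ : χ₂ ⟨ν₂, Subgroup.mem_zpowers ν₂⟩ ^ n = 1 := by
    rw [← map_pow, ← map_one χ₂]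
    exact congrArg χ₂ (Subtype.ext hν₂)
  simp only [mul_tmul_one_eq_smul, hχ, map_pow]
  exact lTensor_lagrangeResolvent_eq_sum_smul (φ := φ.toLinearMap) hχ₂ hν₂ hcomm
    (Finset.range n) (fun i ↦ a (i + 1)) (· + 1) hφα

end CommutativeScalars

open scoped TensorProduct in
theorem stmt_12 {K L : Type*} [Field K] [Fintype K] [Field L] [Algebra K L]
    (f₁ f₂ C₁ C₂ : K[X]) (n : ℕ) (hn₁ : f₁.natDegree = n) (hn₂ : f₂.natDegree = n)
    (h₁ : IsCyclicPolyWith f₁ C₁) (h₂ : IsCyclicPolyWith f₂ C₂)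
    (ν₁ : AdjoinRoot f₁ ≃ₐ[K] AdjoinRoot f₁) (ν₂ : AdjoinRoot f₂ ≃ₐ[K] AdjoinRoot f₂)
    (hν₁ : ν₁ (AdjoinRoot.root f₁) = aeval (AdjoinRoot.root f₁) C₁)
    (hν₂ : ν₂ (AdjoinRoot.root f₂) = aeval (AdjoinRoot.root f₂) C₂)
    (ho₁ : orderOf ν₁ = n) (ho₂ : orderOf ν₂ = n)
    (φ : AdjoinRoot f₁ ≃ₐ[K] AdjoinRoot f₂)
    (hcomm : ∀ x : AdjoinRoot f₁, φ (ν₁ x) = ν₂ (φ x))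
    (a : ℕ → K)
    (hφroot : φ (AdjoinRoot.root f₁) =
      ∑ i ∈ Finset.range n, a (i + 1) • ((ν₂ ^ (i + 1)) (AdjoinRoot.root f₂)))
    (ρ : L) (hρ : IsPrimitiveRoot ρ n) (hL : Algebra.adjoin K {ρ} = ⊤)
    (χ₁ : ↥(Subgroup.zpowers ν₁) →* Lˣ) (χ₂ : ↥(Subgroup.zpowers ν₂) →* Lˣ)
    (hval₁ : ∀ g, ((χ₁ g : Lˣ) : L) ∈ Submonoid.powers ρ)
    (hval₂ : ∀ g, ((χ₂ g : Lˣ) : L) ∈ Submonoid.powers ρ)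
    (hχ : χ₁ ⟨ν₁, Subgroup.mem_zpowers ν₁⟩ = χ₂ ⟨ν₂, Subgroup.mem_zpowers ν₂⟩) :
    Algebra.TensorProduct.map (AlgHom.id K L) φ.toAlgHom
      (∑ i ∈ Finset.range n,
        (((χ₁ ⟨ν₁, Subgroup.mem_zpowers ν₁⟩ : Lˣ) : L) ^ (i + 1)) ⊗ₜ[K]
          ((ν₁ ^ (i + 1)) (AdjoinRoot.root f₁)))
    = (∑ i ∈ Finset.range n,
        (((χ₂ ⟨ν₂, Subgroup.mem_zpowers ν₂⟩ : Lˣ) : L) ^ (i + 1)) ⊗ₜ[K]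
          ((ν₂ ^ (i + 1)) (AdjoinRoot.root f₂)))
      * ((∑ i ∈ Finset.range n,
            a (i + 1) • (((χ₂ (⟨ν₂, Subgroup.mem_zpowers ν₂⟩ ^ (i + 1)))⁻¹ : Lˣ) : L))
          ⊗ₜ[K] (1 : AdjoinRoot f₂)) := by
  simpa only [lagrangeResolvent_apply, AlgEquiv.smul_def] using
    stmt_12_general n (ho₂ ▸ pow_orderOf_eq_one ν₂) φ.toAlgHom hcomm a hφroot χ₁ χ₂ hχ
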